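/- Let w₀ be an admissible word over Ω and let σ be the folding morphism determined by w₀. Then σ maps every admissible word over Ω to an admissible word over Ω. -/

import Mathlib

/-!
If an admissible word `w` begins with `P` and ends with `Q`, its reverse-complement is admissible,
begins with `~Q` and ends with `~P` (`Admissible.revComp`, `head?_revComp`, `getLast?_revComp`).
Admissible words `u`, `v` can be joined by a sign as soon as the last letter of `u` differs from the
first letter of `v` (`Admissible.append`). In the image of an admissible word the blocks `w₀` and
`revComp w₀` alternate, so the letters meeting at a sign are `Q, ~Q` or `~P, P`, which are distinct.
-/

/-- The folding alphabet Ω = {A, B, +, -}. -/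
inductive OmegaLetter : Type
  | A | B | plus | minus
deriving DecidableEq

/-- The complement involution ~ on Ω: ~A = B, ~B = A, ~+ = -, ~- = +. -/
def OmegaLetter.compl : OmegaLetter → OmegaLetter
  | .A => .B
  | .B => .A
  | .plus => .minus
  | .minus => .plus

/-- The reverse-complement of a word: reverse of the letterwise complement. -/
def revComp (w : List OmegaLetter) : List OmegaLetter :=
  (w.map OmegaLetter.compl).reverse

/-- The folding morphism determined by `w0`: the monoid homomorphism on words with
σ(A) = w0, σ(B) = revComp w0, σ(+) = [+], σ(-) = [-]. -/
def foldMorph (w0 : List OmegaLetter) (u : List OmegaLetter) : List OmegaLetter :=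
  (u.map (fun x => match x with
    | OmegaLetter.A => w0
    | OmegaLetter.B => revComp w0
    | OmegaLetter.plus => [OmegaLetter.plus]
    | OmegaLetter.minus => [OmegaLetter.minus])).flatten


/-- Admissible words over Ω: letters from {A,B} and from {+,-} strictly alternate,
consecutive {A,B}-letters are distinct, and the word begins and ends with a letter
from {A,B}. -/
inductive Admissible : List OmegaLetter → Prop
  | single (X : OmegaLetter) (hX : X = OmegaLetter.A ∨ X = OmegaLetter.B) :
      Admissible [X]
  | cons (X s Y : OmegaLetter) (w : List OmegaLetter)
      (hX : X = OmegaLetter.A ∨ X = OmegaLetter.B)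
      (hs : s = OmegaLetter.plus ∨ s = OmegaLetter.minus)
      (hXY : X ≠ Y) (h : Admissible (Y :: w)) :
      Admissible (X :: s :: Y :: w)

theorem OmegaLetter.compl_compl (x : OmegaLetter) : x.compl.compl = x := by cases x <;> rfl

theorem OmegaLetter.compl_ne (x : OmegaLetter) : x.compl ≠ x := by cases x <;> decide

theorem Admissible.ne_nil {w : List OmegaLetter} (h : Admissible w) : w ≠ [] := by
  cases h <;> simp

theorem head?_revComp (w : List OmegaLetter) :
    (revComp w).head? = w.getLast?.map OmegaLetter.compl := by
  simp [_root_.revComp]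

theorem getLast?_revComp (w : List OmegaLetter) :
    (revComp w).getLast? = w.head?.map OmegaLetter.compl := by
  simp [_root_.revComp]

/-- Two admissible words may be joined by a sign when the letters on its two sides differ. -/
theorem Admissible.append {u v : List OmegaLetter} {s : OmegaLetter} (hu : Admissible u)
    (hv : Admissible v) (hs : s = OmegaLetter.plus ∨ s = OmegaLetter.minus)
    (hne : u.getLast? ≠ v.head?) : Admissible (u ++ s :: v) := by
  induction hu with
  | single X hX =>
    cases v with
    | nil => exact absurd rfl hv.ne_nil
    | cons Y w => exact .cons X s Y w hX hs (by simpa using hne) hv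
  | cons X t Y w hX ht hXY h ih =>
    exact .cons X t Y (w ++ s :: v) hX ht hXY (ih (by simpa [List.getLast?_cons_cons] using hne))

theorem Admissible.revComp {w : List OmegaLetter} (h : Admissible w) :
    Admissible (revComp w) := by
  induction h with
  | single X hX =>
    exact .single X.compl (by rcases hX with rfl | rfl <;> simp [OmegaLetter.compl])
  | cons X s Y w hX hs hXY h ih =>
    have key : _root_.revComp (X :: s :: Y :: w)
        = _root_.revComp (Y :: w) ++ s.compl :: [X.compl] := by
      simp [_root_.revComp]
    rw [key]
    refine ih.append (.single X.compl ?_) ?_ ?_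
    · rcases hX with rfl | rfl <;> simp [OmegaLetter.compl]
    · rcases hs with rfl | rfl <;> simp [OmegaLetter.compl]
    · rw [getLast?_revComp]
      intro e
      have e' : Y.compl = X.compl := by simpa using e
      exact hXY (by rw [← X.compl_compl, ← e', Y.compl_compl])

theorem foldMorph_append (w0 u v : List OmegaLetter) :
    foldMorph w0 (u ++ v) = foldMorph w0 u ++ foldMorph w0 v := by
  simp [foldMorph]

theorem foldMorph_A (w0 : List OmegaLetter) : foldMorph w0 [OmegaLetter.A] = w0 := by
  simp [foldMorph]

theorem foldMorph_B (w0 : List OmegaLetter) : foldMorph w0 [OmegaLetter.B] = revComp w0 := by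
  simp [foldMorph]

theorem foldMorph_sign (w0 : List OmegaLetter) {s : OmegaLetter}
    (hs : s = OmegaLetter.plus ∨ s = OmegaLetter.minus) : foldMorph w0 [s] = [s] := by
  rcases hs with rfl | rfl <;> rfl

theorem Admissible.foldMorph_single {w0 : List OmegaLetter} (hw0 : Admissible w0)
    {X : OmegaLetter} (hX : X = OmegaLetter.A ∨ X = OmegaLetter.B) :
    Admissible (foldMorph w0 [X]) := by
  rcases hX with rfl | rfl
  · rwa [foldMorph_A]
  · rw [foldMorph_B]; exact hw0.revComp

theorem Admissible.head_eq {Y : OmegaLetter} {w : List OmegaLetter} (h : Admissible (Y :: w)) :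
    Y = OmegaLetter.A ∨ Y = OmegaLetter.B := by
  cases h <;> assumption

/-- The letters meeting at a sign between the images of two distinct letters of `{A, B}` are
complementary, hence distinct. -/
theorem Admissible.getLast?_ne_head? {w0 : List OmegaLetter} (hw0 : Admissible w0)
    {X Y : OmegaLetter} (hX : X = OmegaLetter.A ∨ X = OmegaLetter.B)
    (hY : Y = OmegaLetter.A ∨ Y = OmegaLetter.B) (hXY : X ≠ Y) :
    (foldMorph w0 [X]).getLast? ≠ (foldMorph w0 [Y]).head? := by
  rcases hX with rfl | rfl <;> rcases hY with rfl | rfl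
  · exact absurd rfl hXY
  · rw [foldMorph_A, foldMorph_B, head?_revComp, List.getLast?_eq_some_getLast hw0.ne_nil]
    simpa using (OmegaLetter.compl_ne _).symm
  · rw [foldMorph_A, foldMorph_B, getLast?_revComp, List.head?_eq_some_head hw0.ne_nil]
    simpa using OmegaLetter.compl_ne _
  · exact absurd rfl hXY

/-- If w₀ is admissible then the folding morphism σ determined by w₀ maps every
admissible word to an admissible word. -/
theorem foldMorph_admissible (w0 : List OmegaLetter) (hw0 : Admissible w0)
    (u : List OmegaLetter) (hu : Admissible u) :
    Admissible (foldMorph w0 u) := by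
  induction hu with
  | single X hX => exact hw0.foldMorph_single hX
  | cons X s Y w hX hs hXY h ih =>
    have hY := h.head_eq
    have split : foldMorph w0 (X :: s :: Y :: w)
        = foldMorph w0 [X] ++ s :: foldMorph w0 (Y :: w) := by
      rw [show X :: s :: Y :: w = [X] ++ ([s] ++ (Y :: w)) from rfl, foldMorph_append,
        foldMorph_append, foldMorph_sign w0 hs]
      rfl
    -- The image of `Y` is nonempty, so it alone determines the first letter of the image of `Y :: w`.
    have head : (foldMorph w0 (Y :: w)).head? = (foldMorph w0 [Y]).head? := by
      rw [show Y :: w = [Y] ++ w from rfl, foldMorph_append,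
        List.head?_append_of_ne_nil _ (hw0.foldMorph_single hY).ne_nil]
    rw [split]
    refine (hw0.foldMorph_single hX).append ih hs ?_
    rw [head]
    exact hw0.getLast?_ne_head? hX hY hXY
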